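/- Let X be a finite type with decidable equality and let Γ : Finset (Finset X) be a spanning graph on X: every edge A ∈ Γ has A.card = 2, and every point of X lies in some edge. Call an edge e ∈ Γ a radical if every vertex of e lies in no other edge of Γ. Then K_Γ is the direct product of the symmetries of the radicals; precisely, a permutation g : Equiv.Perm X satisfies (∀ e ∈ Γ, e.image g = e) if and only if (a) g maps every radical e of Γ to itself, e.image g = e, and (b) g fixes every point lying in some non-radical edge: for all x : X and all e ∈ Γ with x ∈ e and e not a radical, g x = x. -/

import Mathlib

/-!
Two distinct edges share at most one vertex. A map preserving both of them sends a common vertex to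
a common vertex, hence fixes it; being a bijection on each finite edge that it preserves, it then
fixes the other endpoint as well. Thus a non-radical edge is fixed pointwise, while a radical
imposes no constraint beyond being preserved.
-/

section Pair

variable {X : Type*} {e e' : Finset X} {g : X → X} {x y : X}

theorem eq_pair_of_card_le_two [DecidableEq X] (he : e.card ≤ 2) (hx : x ∈ e) (hy : y ∈ e)
    (hxy : x ≠ y) : e = {x, y} :=
  (Finset.eq_of_subset_of_card_le (Finset.insert_subset hx (Finset.singleton_subset_iff.2 hy))
    (he.trans_eq (Finset.card_pair hxy).symm)).symm

theorem eq_of_mem_of_mem_of_ne_of_card_le_two (he : e.card ≤ 2) (he' : e'.card ≤ 2) (hne : e' ≠ e)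
    (hx : x ∈ e) (hx' : x ∈ e') (hy : y ∈ e) (hy' : y ∈ e') : x = y := by
  classical
  by_contra hxy
  exact hne ((eq_pair_of_card_le_two he' hx' hy' hxy).trans
    (eq_pair_of_card_le_two he hx hy hxy).symm)

variable [DecidableEq X]

theorem apply_mem_of_image_eq_self (hg : e.image g = e) (hx : x ∈ e) : g x ∈ e :=
  hg ▸ Finset.mem_image_of_mem g hx

theorem apply_eq_self_of_image_eq_self_of_card_le_two (he : e.card ≤ 2) (hg : e.image g = e)
    (hy : y ∈ e) (hgy : g y = y) (hx : x ∈ e) : g x = x := by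
  obtain rfl | hxy := eq_or_ne x y
  · exact hgy
  have hinj : Set.InjOn g e := Finset.injOn_of_card_image_eq (congrArg Finset.card hg)
  have hgxy : g x ≠ y := fun h ↦ hxy (hinj hx hy (h.trans hgy.symm))
  have hgx : g x ∈ ({x, y} : Finset X) :=
    eq_pair_of_card_le_two he hx hy hxy ▸ apply_mem_of_image_eq_self hg hx
  simpa [hgxy] using hgx

end Pair

section Radical

variable {X : Type*} {Γ : Set (Finset X)} {e : Finset X} {g : X → X} {x : X}

/-- The radical condition on an edge `e` of the graph with edge set `Γ`: no vertex of `e` lies in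
another edge, so that `e` is a connected component by itself. Membership `e ∈ Γ` is not part of the
condition. -/
def IsRadicalEdge (Γ : Set (Finset X)) (e : Finset X) : Prop :=
  ∀ x ∈ e, ∀ e' ∈ Γ, x ∈ e' → e' = e

theorem not_isRadicalEdge_iff :
    ¬ IsRadicalEdge Γ e ↔ ∃ x ∈ e, ∃ e' ∈ Γ, x ∈ e' ∧ e' ≠ e := by
  simp [IsRadicalEdge]

variable [DecidableEq X]

theorem apply_eq_self_of_not_isRadicalEdge (hcard : ∀ e ∈ Γ, e.card ≤ 2)
    (hg : ∀ e ∈ Γ, e.image g = e) (he : e ∈ Γ) (hrad : ¬ IsRadicalEdge Γ e) (hx : x ∈ e) :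
    g x = x := by
  obtain ⟨y, hy, e', he', hy', hne⟩ := not_isRadicalEdge_iff.1 hrad
  have hgy : g y = y :=
    eq_of_mem_of_mem_of_ne_of_card_le_two (hcard e he) (hcard e' he') hne
      (apply_mem_of_image_eq_self (hg e he) hy) (apply_mem_of_image_eq_self (hg e' he') hy') hy hy'
  exact apply_eq_self_of_image_eq_self_of_card_le_two (hcard e he) (hg e he) hy hgy hx

theorem stmt_8_general (hcard : ∀ e ∈ Γ, e.card ≤ 2) :
    (∀ e ∈ Γ, e.image g = e) ↔
      ((∀ e ∈ Γ, IsRadicalEdge Γ e → e.image g = e) ∧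
       (∀ x : X, ∀ e ∈ Γ, x ∈ e → ¬ IsRadicalEdge Γ e → g x = x)) := by
  refine ⟨fun hg ↦ ⟨fun e he _ ↦ hg e he, fun x e he hx hrad ↦
    apply_eq_self_of_not_isRadicalEdge hcard hg he hrad hx⟩, ?_⟩
  rintro ⟨hradical, hfixed⟩ e he
  by_cases hrad : IsRadicalEdge Γ e
  · exact hradical e he hrad
  · exact (Finset.image_congr fun x hx ↦ hfixed x e he hx hrad).trans Finset.image_id

end Radical

theorem stmt_8 {X : Type*} [Fintype X] [DecidableEq X] (Γ : Finset (Finset X))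
    (hcard : ∀ A ∈ Γ, A.card = 2)
    (hspan : ∀ x : X, ∃ A ∈ Γ, x ∈ A) (g : Equiv.Perm X) :
    (∀ e ∈ Γ, e.image ⇑g = e) ↔
      ((∀ e ∈ Γ, (∀ x ∈ e, ∀ e' ∈ Γ, x ∈ e' → e' = e) → e.image ⇑g = e) ∧
       (∀ x : X, ∀ e ∈ Γ, x ∈ e →
          ¬ (∀ y ∈ e, ∀ e' ∈ Γ, y ∈ e' → e' = e) → g x = x)) :=
  stmt_8_general (Γ := (Γ : Set (Finset X))) fun A hA ↦ (hcard A hA).le
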